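/- Let M > 0 and β ≥ 1 + M/(8π). Then the repulsive free energy F⁺_β attains its infimum on the set of admissible functions f on ℝ² with ∫_{ℝ²} f dx = M: there exists an admissible f₀ with ∫_{ℝ²} f₀ dx = M such that F⁺_β[f₀] ≤ F⁺_β[f] for every admissible f with ∫_{ℝ²} f dx = M. -/

import Mathlib

open MeasureTheory Real Filter

noncomputable section

/-- The Euclidean plane ℝ². -/
abbrev E2 := EuclideanSpace ℝ (Fin 2)

/-- The probability density μ(x) = 1/(π (1+|x|²)²) on ℝ². -/
def mu2 (x : E2) : ℝ := 1 / (π * (1 + ‖x‖ ^ 2) ^ 2)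

/-- The external potential V(x) = −log μ(x) = 2 log(1+|x|²) + log π. -/
def Vpot (x : E2) : ℝ := 2 * Real.log (1 + ‖x‖ ^ 2) + Real.log π

/-- A function f on ℝ² is admissible if it is measurable, nonnegative a.e., integrable,
and ∫ f |log f|, ∫ V f and ∬ f(x) f(y) |log|x−y|| are all finite. -/
def Admissible (f : E2 → ℝ) : Prop :=
  Measurable f ∧ (∀ᵐ x : E2, 0 ≤ f x) ∧ Integrable f ∧
  Integrable (fun x => f x * |Real.log (f x)|) ∧
  Integrable (fun x => Vpot x * f x) ∧
  Integrable (fun p : E2 × E2 => f p.1 * f p.2 * |Real.log ‖p.1 - p.2‖|)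

/-- The repulsive free energy F⁺_β. -/
def Fplus (β : ℝ) (f : E2 → ℝ) : ℝ :=
  (∫ x, f x * Real.log (f x)) + β * (∫ x, Vpot x * f x)
    - (1 / (4 * π)) * ∫ p : E2 × E2, f p.1 * f p.2 * Real.log ‖p.1 - p.2‖

/-- The attractive free energy F⁻_β. -/
def Fminus (β : ℝ) (f : E2 → ℝ) : ℝ :=
  (∫ x, f x * Real.log (f x)) + β * (∫ x, Vpot x * f x)
    + (1 / (4 * π)) * ∫ p : E2 × E2, f p.1 * f p.2 * Real.log ‖p.1 - p.2‖

/-! ### Conditional negative definiteness of the logarithmic kernel -/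

lemma abs_exp_neg_mul_sub_exp_neg_le {a s : ℝ} (hs : 0 < s) :
    |exp (-(a * s)) - exp (-s)| ≤ s * (|a - 1| * exp (-(min a 1 * s))) := by
  have key : ∀ u v : ℝ, u ≤ v → |exp (-u) - exp (-v)| ≤ (v - u) * exp (-u) := by
    intro u v huv
    have h1 : exp (-v) = exp (-u) * exp (-(v - u)) := by rw [← exp_add]; ring_nf
    have h2 := add_one_le_exp (-(v - u))
    have h3 : exp (-v) ≤ exp (-u) := exp_le_exp.2 (by linarith)
    rw [abs_of_nonneg (by linarith)]
    nlinarith [exp_pos (-u)]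
  rcases le_total a 1 with h | h
  · have := key (a * s) s (by nlinarith)
    rw [min_eq_left h, abs_sub_comm a, abs_of_nonneg (by linarith : 0 ≤ 1 - a)]
    linarith [this]
  · have := key s (a * s) (by nlinarith)
    rw [abs_sub_comm, min_eq_right h, abs_of_nonneg (by linarith : 0 ≤ a - 1), one_mul]
    linarith [this]

lemma integrableOn_inv_mul_exp_sub_exp {a : ℝ} (ha : 0 < a) :
    IntegrableOn (fun s : ℝ => s⁻¹ * (exp (-(a * s)) - exp (-s))) (Set.Ioi 0) := by
  have hm : 0 < min a 1 := lt_min ha one_pos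
  have h := ((integrableOn_Ioi_comp_mul_left_iff (fun x => exp (-x)) 0 hm).2
    (by simpa using integrableOn_exp_neg_Ioi 0)).const_mul |a - 1|
  refine Integrable.mono' h (by fun_prop) ?_
  filter_upwards [ae_restrict_mem measurableSet_Ioi] with s hs
  have hs : 0 < s := hs
  rw [norm_mul, norm_inv, Real.norm_eq_abs, Real.norm_eq_abs, abs_of_pos hs,
    inv_mul_le_iff₀ hs]
  exact abs_exp_neg_mul_sub_exp_neg_le hs

lemma integral_inv_mul_exp_sub_exp {a : ℝ} (ha : 0 < a) :
    ∫ s in Set.Ioi (0 : ℝ), s⁻¹ * (exp (-(a * s)) - exp (-s)) = -log a := by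
  have hc : Continuous fun x : ℝ => exp (-x) := by fun_prop
  have h := Frullani.integral_Ioi_eq (f := fun x : ℝ => exp (-x)) (a := a) (b := 1)
    (L := 1) (R := 0) (hc.locallyIntegrable.locallyIntegrableOn _) ha one_pos
    ((by simpa using hc.tendsto 0 : Tendsto (fun x : ℝ => exp (-x)) (nhds 0) (nhds 1)).mono_left
      nhdsWithin_le_nhds) tendsto_exp_neg_atTop_nhds_zero
    (by simpa using integrableOn_inv_mul_exp_sub_exp ha)
  simpa using h

lemma integral_norm_inv_mul_exp_sub_exp {a : ℝ} (ha : 0 < a) :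
    ∫ s in Set.Ioi (0 : ℝ), ‖s⁻¹ * (exp (-(a * s)) - exp (-s))‖ = |log a| := by
  rcases le_total a 1 with h | h
  · rw [abs_of_nonpos (log_nonpos ha.le h), ← integral_inv_mul_exp_sub_exp ha]
    refine setIntegral_congr_fun measurableSet_Ioi fun s hs => ?_
    have hs : 0 < s := hs
    refine Real.norm_of_nonneg (mul_nonneg (inv_nonneg.2 hs.le) (sub_nonneg.2 ?_))
    exact exp_le_exp.2 (by nlinarith)
  · rw [abs_of_nonneg (log_nonneg h), ← neg_neg (log a), ← integral_inv_mul_exp_sub_exp ha,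
      ← integral_neg]
    refine setIntegral_congr_fun measurableSet_Ioi fun s hs => ?_
    have hs : 0 < s := hs
    refine Real.norm_of_nonpos (mul_nonpos_of_nonneg_of_nonpos (inv_nonneg.2 hs.le)
      (sub_nonpos.2 ?_))
    exact exp_le_exp.2 (by nlinarith)

lemma integrable_exp_neg_mul_sq_norm {b : ℝ} (hb : 0 < b) :
    Integrable fun z : E2 => exp (-b * ‖z‖ ^ 2) := by
  by_contra h
  have h1 := GaussianFourier.integral_rexp_neg_mul_sq_norm (V := E2) hb
  rw [integral_undef h] at h1
  have : 0 < (π / b) ^ (Module.finrank ℝ E2 / 2 : ℝ) := by positivity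
  linarith

lemma integral_exp_mul_exp_eq {b : ℝ} (x y : E2) :
    ∫ z : E2, exp (-b * ‖x - z‖ ^ 2) * exp (-b * ‖y - z‖ ^ 2) =
      exp (-(‖x - y‖ ^ 2 * (b / 2))) * ∫ z : E2, exp (-(2 * b) * ‖z‖ ^ 2) := by
  rw [← integral_const_mul,
    ← integral_sub_right_eq_self (fun z : E2 => exp (-(‖x - y‖ ^ 2 * (b / 2))) *
      exp (-(2 * b) * ‖z‖ ^ 2)) ((2⁻¹ : ℝ) • (x + y))]
  congr 1 with z
  rw [← exp_add, ← exp_add]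
  congr 1
  have h := parallelogram_law_with_norm ℝ (x - z) (y - z)
  have h1 : x - z + (y - z) = (-2 : ℝ) • (z - (2⁻¹ : ℝ) • (x + y)) := by module
  have h2 : x - z - (y - z) = x - y := by abel
  rw [h1, h2, norm_smul, show ‖(-2 : ℝ)‖ = 2 by norm_num] at h
  linear_combination (b / 2) * h

lemma MeasureTheory.Integrable.mul_exp_neg_sq_norm_sub {F : E2 × E2 → ℝ} (hF : Integrable F)
    {s : ℝ} (hs : 0 ≤ s) : Integrable fun p => F p * exp (-(‖p.1 - p.2‖ ^ 2 * s)) := by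
  refine hF.mul_bdd (c := 1) (by fun_prop) (Eventually.of_forall fun p => ?_)
  rw [Real.norm_of_nonneg (exp_pos _).le]
  exact exp_le_one_iff.2 (by nlinarith [sq_nonneg ‖p.1 - p.2‖])

/-- The Gaussian kernel is positive definite. -/
lemma integral_mul_mul_exp_nonneg {h : E2 → ℝ} (hi : Integrable h) {s : ℝ} (hs : 0 < s) :
    0 ≤ ∫ p : E2 × E2, h p.1 * h p.2 * exp (-(‖p.1 - p.2‖ ^ 2 * s)) := by
  set c := ∫ z : E2, exp (-(2 * (2 * s)) * ‖z‖ ^ 2) with hc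
  have hcpos : 0 < c := by
    rw [hc, GaussianFourier.integral_rexp_neg_mul_sq_norm (by positivity)]
    positivity
  let G : (E2 × E2) × E2 → ℝ := fun q => h q.1.1 * h q.1.2 *
    (exp (-(2 * s) * ‖q.1.1 - q.2‖ ^ 2) * exp (-(2 * s) * ‖q.1.2 - q.2‖ ^ 2))
  have hhh : Integrable (fun p : E2 × E2 => h p.1 * h p.2) := hi.mul_prod hi
  have hsec : ∀ p : E2 × E2, ∫ z, G (p, z) =
      c * (h p.1 * h p.2 * exp (-(‖p.1 - p.2‖ ^ 2 * s))) := by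
    intro p
    simp only [G]
    rw [integral_const_mul, integral_exp_mul_exp_eq, hc]
    rw [show 2 * s / 2 = s by ring]
    ring
  have hsecint : ∀ p : E2 × E2, Integrable (fun z : E2 =>
      exp (-(2 * s) * ‖p.1 - z‖ ^ 2) * exp (-(2 * s) * ‖p.2 - z‖ ^ 2)) := by
    intro p
    have h1 := (integrable_exp_neg_mul_sq_norm (b := 2 * s) (by positivity)).comp_sub_left p.1
    refine h1.mono (by fun_prop) (Eventually.of_forall fun z => ?_)
    rw [norm_mul]
    refine mul_le_of_le_one_right (norm_nonneg _) ?_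
    rw [Real.norm_of_nonneg (exp_pos _).le]
    exact exp_le_one_iff.2 (by nlinarith [sq_nonneg ‖p.2 - z‖])
  have hG : Integrable G ((volume : Measure (E2 × E2)).prod volume) := by
    have hmeas : AEStronglyMeasurable G ((volume : Measure (E2 × E2)).prod volume) :=
      (hhh.aestronglyMeasurable.comp_fst).mul (by fun_prop)
    rw [integrable_prod_iff hmeas]
    refine ⟨Eventually.of_forall fun p => (hsecint p).const_mul (h p.1 * h p.2), ?_⟩
    have : ∀ p : E2 × E2, ∫ z, ‖G (p, z)‖ =
        c * (‖h p.1 * h p.2‖ * exp (-(‖p.1 - p.2‖ ^ 2 * s))) := by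
      intro p
      simp only [G]
      simp_rw [norm_mul (h p.1 * h p.2)]
      rw [integral_const_mul]
      simp_rw [Real.norm_of_nonneg (mul_pos (exp_pos _) (exp_pos _)).le]
      rw [integral_exp_mul_exp_eq, hc, show 2 * s / 2 = s by ring]
      ring
    simp_rw [this]
    exact (hhh.norm.mul_exp_neg_sq_norm_sub hs.le).const_mul c
  have h1 := integral_integral_swap (f := fun p z => G (p, z)) hG
  have h2 : ∀ z : E2, 0 ≤ ∫ p : E2 × E2, G (p, z) := by
    intro z
    have : ∀ p : E2 × E2, G (p, z) = (h p.1 * exp (-(2 * s) * ‖p.1 - z‖ ^ 2)) *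
        (h p.2 * exp (-(2 * s) * ‖p.2 - z‖ ^ 2)) := fun p => by simp only [G]; ring
    simp_rw [this]
    rw [Measure.volume_eq_prod,
      integral_prod_mul (fun x => h x * exp (-(2 * s) * ‖x - z‖ ^ 2))
        (fun x => h x * exp (-(2 * s) * ‖x - z‖ ^ 2))]
    exact mul_self_nonneg _
  have h3 : 0 ≤ ∫ p : E2 × E2, ∫ z, G (p, z) := by
    rw [h1]; exact integral_nonneg h2
  simp_rw [hsec] at h3
  rw [integral_const_mul] at h3
  exact nonneg_of_mul_nonneg_right h3 hcpos

lemma ae_fst_ne_snd : ∀ᵐ p : E2 × E2, 0 < ‖p.1 - p.2‖ := by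
  have h := (quasiMeasurePreserving_sub (volume : Measure E2) (volume : Measure E2)).ae
    (p := fun z => z ≠ 0) (Measure.ae_ne volume 0)
  filter_upwards [h] with p hp
  simpa using hp

/-- The logarithmic kernel is negative definite on functions with vanishing integral. -/
lemma integral_mul_mul_log_nonpos {h : E2 → ℝ} (hi : Integrable h)
    (h0 : ∫ x, h x = 0)
    (hl : Integrable fun p : E2 × E2 => h p.1 * h p.2 * log ‖p.1 - p.2‖) :
    ∫ p : E2 × E2, h p.1 * h p.2 * log ‖p.1 - p.2‖ ≤ 0 := by
  have hhh : Integrable (fun p : E2 × E2 => h p.1 * h p.2) := hi.mul_prod hi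
  have hhh0 : ∫ p : E2 × E2, h p.1 * h p.2 = 0 := by
    rw [Measure.volume_eq_prod, integral_prod_mul, h0, zero_mul]
  let G : (E2 × E2) × ℝ → ℝ := fun q => h q.1.1 * h q.1.2 *
    (q.2⁻¹ * (exp (-(‖q.1.1 - q.1.2‖ ^ 2 * q.2)) - exp (-q.2)))
  have hG : Integrable G
      ((volume : Measure (E2 × E2)).prod (volume.restrict (Set.Ioi (0 : ℝ)))) := by
    have hmeas : AEStronglyMeasurable G
        ((volume : Measure (E2 × E2)).prod (volume.restrict (Set.Ioi (0 : ℝ)))) :=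
      (hhh.aestronglyMeasurable.comp_fst).mul
        (Measurable.aestronglyMeasurable (by fun_prop))
    rw [integrable_prod_iff hmeas]
    constructor
    · filter_upwards [ae_fst_ne_snd] with p hp
      exact (integrableOn_inv_mul_exp_sub_exp (pow_pos hp 2)).const_mul (h p.1 * h p.2)
    · refine (hl.norm.const_mul 2).congr ?_
      filter_upwards [ae_fst_ne_snd] with p hp
      simp only [G]
      simp_rw [norm_mul (h p.1 * h p.2)]
      rw [integral_const_mul, integral_norm_inv_mul_exp_sub_exp (by positivity), log_pow, abs_mul,
        Real.norm_eq_abs (log _)]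
      norm_num
      ring
  have h1 := integral_integral_swap (f := fun p s => G (p, s)) hG
  have h2 : ∫ p : E2 × E2, ∫ s in Set.Ioi (0 : ℝ), G (p, s) =
      -2 * ∫ p : E2 × E2, h p.1 * h p.2 * log ‖p.1 - p.2‖ := by
    rw [← integral_const_mul]
    refine integral_congr_ae ?_
    filter_upwards [ae_fst_ne_snd] with p hp
    simp only [G]
    rw [integral_const_mul, integral_inv_mul_exp_sub_exp (by positivity), log_pow]
    push_cast
    ring
  have h3 : 0 ≤ ∫ s in Set.Ioi (0 : ℝ), ∫ p : E2 × E2, G (p, s) := by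
    refine setIntegral_nonneg measurableSet_Ioi fun s hs => ?_
    have hs : 0 < s := hs
    have hint : Integrable fun p : E2 × E2 => h p.1 * h p.2 * exp (-(‖p.1 - p.2‖ ^ 2 * s)) :=
      hhh.mul_exp_neg_sq_norm_sub hs.le
    have : ∀ p : E2 × E2, G (p, s) = s⁻¹ * (h p.1 * h p.2 * exp (-(‖p.1 - p.2‖ ^ 2 * s)) -
        exp (-s) * (h p.1 * h p.2)) := fun p => by simp only [G]; ring
    simp_rw [this]
    rw [integral_const_mul, integral_sub hint (hhh.const_mul _), integral_const_mul, hhh0,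
      mul_zero, sub_zero]
    exact mul_nonneg (inv_nonneg.2 hs.le) (integral_mul_mul_exp_nonneg hi hs)
  rw [← h1, h2] at h3
  linarith

/-! ### Functions with finite entropy and finite logarithmic moment -/

/-- Nonnegative integrable functions with finite entropy and finite logarithmic moment. -/
structure FiniteEntropyMoment (f : E2 → ℝ) : Prop where
  measurable : Measurable f
  nonneg : ∀ᵐ x : E2, 0 ≤ f x
  integrable : Integrable f
  entropy : Integrable fun x => f x * log (f x)
  moment : Integrable fun x => log (1 + ‖x‖ ^ 2) * f x

lemma Admissible.finiteEntropyMoment {f : E2 → ℝ} (hf : Admissible f) :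
    FiniteEntropyMoment f := by
  obtain ⟨hm, h0, hi, he, hV, -⟩ := hf
  refine ⟨hm, h0, hi, he.mono (by fun_prop) ?_, ?_⟩
  · filter_upwards with x
    simp
  · refine ((hV.sub (hi.const_mul (log π))).const_mul 2⁻¹).congr ?_
    filter_upwards with x
    simp only [Vpot, Pi.sub_apply]
    ring

lemma log_one_add_sq_norm_nonneg (x : E2) : 0 ≤ log (1 + ‖x‖ ^ 2) :=
  log_nonneg (by nlinarith [sq_nonneg ‖x‖])

lemma log_norm_sub_le {x y : E2} (h : 0 < ‖x - y‖) :
    log ‖x - y‖ ≤ 2⁻¹ * (log (1 + ‖x‖ ^ 2) + log (1 + ‖y‖ ^ 2)) := by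
  have h1 : ‖x - y‖ ^ 2 ≤ (1 + ‖x‖ ^ 2) * (1 + ‖y‖ ^ 2) := by
    have := norm_sub_le x y
    nlinarith [sq_nonneg (1 - ‖x‖ * ‖y‖), norm_nonneg x, norm_nonneg y, norm_nonneg (x - y)]
  have h2 := log_le_log (by positivity) h1
  rw [log_pow, log_mul (by positivity) (by positivity)] at h2
  push_cast at h2
  linarith

/-- Young's inequality for the entropy function and its Legendre transform. -/
lemma mul_le_mul_log_sub_add_exp {a : ℝ} (ha : 0 ≤ a) (b : ℝ) :
    a * b ≤ a * log a - a + exp b := by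
  rcases ha.eq_or_lt with rfl | ha
  · simpa using (exp_pos b).le
  · have h := add_one_le_exp (b - log a)
    rw [exp_sub, exp_log ha, le_div_iff₀ ha] at h
    linarith

/-- Quantitative midpoint convexity of the entropy function. -/
lemma mul_abs_sub_le_entropy_gap {a b : ℝ} (ha : 0 ≤ a) (hb : 0 ≤ b) (t : ℝ) :
    t * |a - b| ≤ t ^ 2 * (a + b) +
      (a * log a + b * log b - 2 * (2⁻¹ * (a + b) * log (2⁻¹ * (a + b)))) := by
  obtain ⟨p, hp, rfl⟩ : ∃ p : ℝ, 0 ≤ p ∧ p ^ 2 = a := ⟨√a, sqrt_nonneg a, sq_sqrt ha⟩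
  obtain ⟨q, hq, rfl⟩ : ∃ q : ℝ, 0 ≤ q ∧ q ^ 2 = b := ⟨√b, sqrt_nonneg b, sq_sqrt hb⟩
  obtain ⟨r, hr, hm⟩ : ∃ r : ℝ, 0 ≤ r ∧ r ^ 2 = 2⁻¹ * (p ^ 2 + q ^ 2) :=
    ⟨√(2⁻¹ * (p ^ 2 + q ^ 2)), sqrt_nonneg _, sq_sqrt (by positivity)⟩
  rw [← hm]
  have key : ∀ u : ℝ, 0 ≤ u → u ^ 2 ≤ 2 * r ^ 2 →
      2 * u ^ 2 - 2 * (u * r) ≤ u ^ 2 * log (u ^ 2) - u ^ 2 * log (r ^ 2) := by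
    intro u hu hur
    rcases hu.eq_or_lt with rfl | hu
    · simp
    have hr : 0 < r := by
      rcases hr.eq_or_lt with rfl | hr
      · nlinarith
      · exact hr
    have h := log_le_sub_one_of_pos (div_pos hr hu)
    rw [log_div hr.ne' hu.ne', le_sub_iff_add_le, le_div_iff₀ hu] at h
    rw [log_pow, log_pow]
    push_cast
    nlinarith
  have hp' := key p hp (by nlinarith [sq_nonneg q])
  have hq' := key q hq (by nlinarith [sq_nonneg p])
  have habs : t * |p ^ 2 - q ^ 2| ≤ t ^ 2 * (p ^ 2 + q ^ 2) + 2⁻¹ * (p - q) ^ 2 := by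
    rw [show p ^ 2 - q ^ 2 = (p - q) * (p + q) by ring, abs_mul, abs_of_nonneg (add_nonneg hp hq),
      ← sq_abs (p - q)]
    nlinarith [sq_nonneg (|p - q| - t * (p + q)), sq_nonneg (t * (p - q))]
  have hL : 2 * (r ^ 2 * log (r ^ 2)) = p ^ 2 * log (r ^ 2) + q ^ 2 * log (r ^ 2) := by
    linear_combination 2 * log (r ^ 2) * hm
  nlinarith [sq_nonneg (p + q - 2 * r)]

lemma abs_half_add_mul_log_le {a b : ℝ} (ha : 0 ≤ a) (hb : 0 ≤ b) :
    |2⁻¹ * (a + b) * log (2⁻¹ * (a + b))| ≤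
      |a * log a| + |b * log b| + log 2 * (a + b) := by
  have hup := mul_abs_sub_le_entropy_gap ha hb 0
  have hlow : ∀ u v : ℝ, 0 ≤ u → 0 ≤ v → u * log u ≤ u * log (u + v) := by
    intro u v hu hv
    rcases hu.eq_or_lt with rfl | hu
    · simp
    · exact mul_le_mul_of_nonneg_left (log_le_log hu (by linarith)) hu.le
  have h1 := hlow a b ha hb
  have h2 := hlow b a hb ha
  rw [add_comm b a] at h2
  have h3 : 2⁻¹ * (a + b) * log (2⁻¹ * (a + b)) =
      2⁻¹ * (a + b) * log (a + b) - 2⁻¹ * (a + b) * log 2 := by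
    rcases (add_nonneg ha hb).eq_or_lt with h | h
    · simp [← h]
    · rw [log_mul (by norm_num) h.ne', log_inv]
      ring
  have hl2 : 0 ≤ log 2 * (a + b) := mul_nonneg (log_nonneg one_le_two) (add_nonneg ha hb)
  have := neg_abs_le (a * log a)
  have := neg_abs_le (b * log b)
  have := le_abs_self (a * log a)
  have := le_abs_self (b * log b)
  have := abs_nonneg (a * log a)
  have := abs_nonneg (b * log b)
  rw [abs_le]
  constructor <;> linarith

lemma FiniteEntropyMoment.midpoint {f g : E2 → ℝ} (hf : FiniteEntropyMoment f)
    (hg : FiniteEntropyMoment g) : FiniteEntropyMoment fun x => 2⁻¹ * (f x + g x) where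
  measurable := (hf.measurable.add hg.measurable).const_mul _
  nonneg := by
    filter_upwards [hf.nonneg, hg.nonneg] with x h1 h2
    positivity
  integrable := (hf.integrable.add hg.integrable).const_mul _
  entropy := by
    have := hf.measurable
    have := hg.measurable
    refine ((hf.entropy.abs.add hg.entropy.abs).add
      ((hf.integrable.add hg.integrable).const_mul (log 2))).mono' (by fun_prop) ?_
    filter_upwards [hf.nonneg, hg.nonneg] with x h1 h2
    exact abs_half_add_mul_log_le h1 h2
  moment := by
    refine ((hf.moment.add hg.moment).const_mul 2⁻¹).congr (Eventually.of_forall fun x => ?_)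
    simp only [Pi.add_apply]
    ring

lemma integrable_indicator_ball_inv_norm :
    Integrable ((Metric.ball (0 : E2) 1).indicator fun z => ‖z‖⁻¹) := by
  rw [integrable_indicator_iff measurableSet_ball,
    integrableOn_fun_norm_addHaar (volume : Measure E2) (f := fun r => r⁻¹)]
  refine (integrableOn_const (C := (1 : ℝ)) (by simp)).congr_fun (fun r hr => ?_)
    measurableSet_Ioo
  simp [mul_inv_cancel₀ hr.1.ne']

lemma mul_abs_log_norm_le {a : ℝ} (ha : 0 ≤ a) {x y : E2} (h : 0 < ‖x - y‖) :
    a * |log ‖x - y‖| ≤ 2 * |a * log a| +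
      2 * (Metric.ball (0 : E2) 1).indicator (fun z => ‖z‖⁻¹) (x - y) +
      a * (2⁻¹ * (log (1 + ‖x‖ ^ 2) + log (1 + ‖y‖ ^ 2))) := by
  have hx := log_one_add_sq_norm_nonneg x
  have hy := log_one_add_sq_norm_nonneg y
  rcases lt_or_ge ‖x - y‖ 1 with h1 | h1
  · rw [Set.indicator_of_mem (by simpa using h1), abs_of_nonpos (log_nonpos h.le h1.le)]
    have h2 := mul_le_mul_log_sub_add_exp ha (-log ‖x - y‖)
    rw [exp_neg, exp_log h] at h2
    have := le_abs_self (a * log a)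
    have := abs_nonneg (a * log a)
    have : 0 ≤ ‖x - y‖⁻¹ := by positivity
    have : 0 ≤ a * (2⁻¹ * (log (1 + ‖x‖ ^ 2) + log (1 + ‖y‖ ^ 2))) := by positivity
    linarith
  · rw [Set.indicator_of_notMem (by simpa using h1), abs_of_nonneg (log_nonneg h1)]
    have := mul_le_mul_of_nonneg_left (log_norm_sub_le h) ha
    have := abs_nonneg (a * log a)
    linarith

lemma FiniteEntropyMoment.integrable_interaction {f g : E2 → ℝ} (hf : FiniteEntropyMoment f)
    (hg : FiniteEntropyMoment g) :
    Integrable fun p : E2 × E2 => f p.1 * g p.2 * log ‖p.1 - p.2‖ := by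
  have := hf.measurable
  have := hg.measurable
  have hconv : Integrable (fun p : E2 × E2 =>
      g p.2 * (Metric.ball (0 : E2) 1).indicator (fun z => ‖z‖⁻¹) (p.1 - p.2)) :=
    hg.integrable.convolution_integrand (ContinuousLinearMap.mul ℝ ℝ)
      integrable_indicator_ball_inv_norm
  have hent : Integrable (fun p : E2 × E2 => |f p.1 * log (f p.1)| * g p.2) :=
    hf.entropy.abs.mul_prod hg.integrable
  have hmf : Integrable (fun p : E2 × E2 => (log (1 + ‖p.1‖ ^ 2) * f p.1) * g p.2) :=
    hf.moment.mul_prod hg.integrable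
  have hmg : Integrable (fun p : E2 × E2 => f p.1 * (log (1 + ‖p.2‖ ^ 2) * g p.2)) :=
    hf.integrable.mul_prod hg.moment
  have hf0 : ∀ᵐ p : E2 × E2, 0 ≤ f p.1 :=
    Measure.quasiMeasurePreserving_fst.ae hf.nonneg
  have hg0 : ∀ᵐ p : E2 × E2, 0 ≤ g p.2 :=
    Measure.quasiMeasurePreserving_snd.ae hg.nonneg
  refine (((hent.const_mul 2).add (hconv.const_mul 2)).add
    ((hmf.add hmg).const_mul 2⁻¹)).mono' (by fun_prop) ?_
  filter_upwards [hf0, hg0, ae_fst_ne_snd] with p h1 h2 h3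
  rw [norm_mul, norm_mul, Real.norm_of_nonneg h1, Real.norm_of_nonneg h2, Real.norm_eq_abs]
  have h4 := mul_le_mul_of_nonneg_left (mul_abs_log_norm_le h1 h3) h2
  simp only [Pi.add_apply]
  linarith

lemma FiniteEntropyMoment.admissible {f : E2 → ℝ} (hf : FiniteEntropyMoment f) :
    Admissible f := by
  have := hf.measurable
  refine ⟨hf.measurable, hf.nonneg, hf.integrable, hf.entropy.mono (by fun_prop) ?_, ?_,
    (hf.integrable_interaction hf).mono (by fun_prop) ?_⟩
  · filter_upwards with x
    simp
  · refine ((hf.moment.const_mul 2).add (hf.integrable.const_mul (log π))).congr ?_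
    filter_upwards with x
    simp only [Vpot, Pi.add_apply]
    ring
  · filter_upwards with p
    simp

lemma exists_finiteEntropyMoment_integral_eq {M : ℝ} (hM : 0 < M) :
    ∃ f : E2 → ℝ, FiniteEntropyMoment f ∧ ∫ x, f x = M := by
  set B := Metric.closedBall (0 : E2) 1
  have hB : MeasurableSet B := measurableSet_closedBall
  have hBf : volume B ≠ ⊤ := measure_closedBall_lt_top.ne
  have hBpos : 0 < volume.real B :=
    ENNReal.toReal_pos (Metric.measure_closedBall_pos _ _ one_pos).ne' hBf
  set c := M / volume.real B
  have hc : 0 < c := by positivity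
  have hind : ∀ φ : E2 → ℝ, ContinuousOn φ B → Integrable (B.indicator φ) := fun φ hφ =>
    (integrable_indicator_iff hB).2 (hφ.integrableOn_compact (isCompact_closedBall _ _))
  refine ⟨B.indicator fun _ => c, ⟨measurable_const.indicator hB,
    Eventually.of_forall (Set.indicator_nonneg fun _ _ => hc.le), hind _ continuousOn_const,
    (hind (fun _ => c * log c) continuousOn_const).congr ?_,
    (hind (fun x => log (1 + ‖x‖ ^ 2) * c) ?_).congr ?_⟩, ?_⟩
  · filter_upwards with x
    by_cases hx : x ∈ B <;> simp [hx]
  · refine Continuous.continuousOn ?_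
    exact (Continuous.log (by fun_prop) fun x => by positivity).mul continuous_const
  · filter_upwards with x
    by_cases hx : x ∈ B <;> simp [hx]
  · rw [integral_indicator hB, setIntegral_const, smul_eq_mul]
    exact mul_div_cancel₀ _ hBpos.ne'

/-! ### Midpoint convexity and lower semicontinuity of the energy -/

lemma FiniteEntropyMoment.integral_Vpot_mul {f : E2 → ℝ} (hf : FiniteEntropyMoment f) :
    ∫ x, Vpot x * f x = 2 * (∫ x, log (1 + ‖x‖ ^ 2) * f x) + log π * ∫ x, f x := by
  rw [← integral_const_mul, ← integral_const_mul,
    ← integral_add (hf.moment.const_mul _) (hf.integrable.const_mul _)]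
  congr 1 with x
  simp only [Vpot]
  ring

/-- Quantitative midpoint convexity of `Fplus β` on functions of equal mass. -/
lemma mul_integral_abs_sub_le_Fplus_gap (β : ℝ) {f g : E2 → ℝ} (hf : FiniteEntropyMoment f)
    (hg : FiniteEntropyMoment g) (hfg : ∫ x, f x = ∫ x, g x) (t : ℝ) :
    t * ∫ x, |f x - g x| ≤ t ^ 2 * ((∫ x, f x) + ∫ x, g x) +
      (Fplus β f + Fplus β g - 2 * Fplus β fun x => 2⁻¹ * (f x + g x)) := by
  have hh := hf.midpoint hg
  have hent : t * ∫ x, |f x - g x| ≤ t ^ 2 * ((∫ x, f x) + ∫ x, g x) +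
      ((∫ x, f x * log (f x)) + (∫ x, g x * log (g x)) -
        2 * ∫ x, 2⁻¹ * (f x + g x) * log (2⁻¹ * (f x + g x))) := by
    have hI : Integrable fun x => f x + g x := hf.integrable.add hg.integrable
    have hE : Integrable fun x => f x * log (f x) + g x * log (g x) := hf.entropy.add hg.entropy
    have hD : Integrable fun x => f x * log (f x) + g x * log (g x) -
        2 * (2⁻¹ * (f x + g x) * log (2⁻¹ * (f x + g x))) := hE.sub (hh.entropy.const_mul 2)
    rw [← integral_const_mul, ← integral_add hf.integrable hg.integrable, ← integral_const_mul,
      ← integral_const_mul, ← integral_add hf.entropy hg.entropy,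
      ← integral_sub hE (hh.entropy.const_mul 2), ← integral_add (hI.const_mul _) hD]
    refine integral_mono_ae ((hf.integrable.sub hg.integrable).abs.const_mul t)
      ((hI.const_mul _).add hD) ?_
    filter_upwards [hf.nonneg, hg.nonneg] with x h1 h2
    exact mul_abs_sub_le_entropy_gap h1 h2 t
  have hV : 2 * ∫ x, Vpot x * (2⁻¹ * (f x + g x)) =
      (∫ x, Vpot x * f x) + ∫ x, Vpot x * g x := by
    rw [← integral_add hf.admissible.2.2.2.2.1 hg.admissible.2.2.2.2.1, ← integral_const_mul]
    congr 1 with x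
    ring
  have hff := hf.integrable_interaction hf
  have hgg := hg.integrable_interaction hg
  have hfg' := hf.integrable_interaction hg
  have hgf := hg.integrable_interaction hf
  have hd : Integrable fun p : E2 × E2 =>
      (f p.1 - g p.1) * (f p.2 - g p.2) * log ‖p.1 - p.2‖ := by
    refine ((hff.sub hfg').sub (hgf.sub hgg)).congr (Eventually.of_forall fun p => ?_)
    simp only [Pi.sub_apply]
    ring
  have hd0 := integral_mul_mul_log_nonpos (hf.integrable.sub hg.integrable)
    (by simp only [Pi.sub_apply]; rw [integral_sub hf.integrable hg.integrable, hfg, sub_self]) hd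
  simp only [Pi.sub_apply] at hd0
  have hint : 2 * ∫ p : E2 × E2, 2⁻¹ * (f p.1 + g p.1) * (2⁻¹ * (f p.2 + g p.2)) *
        log ‖p.1 - p.2‖ =
      (∫ p : E2 × E2, f p.1 * f p.2 * log ‖p.1 - p.2‖) +
      (∫ p : E2 × E2, g p.1 * g p.2 * log ‖p.1 - p.2‖) -
      2⁻¹ * ∫ p : E2 × E2, (f p.1 - g p.1) * (f p.2 - g p.2) * log ‖p.1 - p.2‖ := by
    have hsum : Integrable fun p : E2 × E2 => f p.1 * f p.2 * log ‖p.1 - p.2‖ +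
        g p.1 * g p.2 * log ‖p.1 - p.2‖ := hff.add hgg
    rw [← integral_const_mul, ← integral_const_mul, ← integral_add hff hgg,
      ← integral_sub hsum (hd.const_mul _)]
    congr 1 with p
    ring
  have hpi : 0 ≤ 1 / (4 * π) := by positivity
  simp only [Fplus]
  have hprod := mul_nonneg hpi (neg_nonneg.2 hd0)
  linear_combination hent + 2⁻¹ * hprod + β * hV - 1 / (4 * π) * hint

/-- The local part of the energy, normalised to be nonnegative. -/
def localEnergy (δ : ℝ) (f : E2 → ℝ) (x : E2) : ℝ :=
  f x * log (f x) + (2 + 2 * δ) * (log (1 + ‖x‖ ^ 2) * f x) - f x +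
    exp (-(3 / 2) * log (1 + ‖x‖ ^ 2))

/-- The logarithmic repulsion together with the part of the confinement balancing it. -/
def screenedInteraction (f : E2 → ℝ) (p : E2 × E2) : ℝ :=
  1 / (4 * π) * (f p.1 * f p.2 *
    (2⁻¹ * (log (1 + ‖p.1‖ ^ 2) + log (1 + ‖p.2‖ ^ 2)) - log ‖p.1 - p.2‖))

lemma integrable_exp_neg_log_one_add_sq_norm :
    Integrable fun x : E2 => exp (-(3 / 2) * log (1 + ‖x‖ ^ 2)) := by
  have h := integrable_rpow_neg_one_add_norm_sq (E := E2) (μ := volume) (r := 3) (by simp; norm_num)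
  refine h.congr (Eventually.of_forall fun x => ?_)
  simp only
  rw [rpow_def_of_pos (by positivity)]
  ring_nf

lemma moment_le_localEnergy {δ : ℝ} (hδ : 0 ≤ δ) {f : E2 → ℝ} {x : E2} (hx : 0 ≤ f x) :
    2⁻¹ * (log (1 + ‖x‖ ^ 2) * f x) ≤ localEnergy δ f x := by
  have h := mul_le_mul_log_sub_add_exp hx (-(3 / 2) * log (1 + ‖x‖ ^ 2))
  have := mul_nonneg hδ (mul_nonneg (log_one_add_sq_norm_nonneg x) hx)
  simp only [localEnergy]
  linarith

lemma localEnergy_nonneg {δ : ℝ} (hδ : 0 ≤ δ) {f : E2 → ℝ} {x : E2} (hx : 0 ≤ f x) :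
    0 ≤ localEnergy δ f x :=
  le_trans (mul_nonneg (by norm_num) (mul_nonneg (log_one_add_sq_norm_nonneg x) hx))
    (moment_le_localEnergy hδ hx)

lemma screenedInteraction_nonneg {f : E2 → ℝ} (hf : ∀ᵐ x : E2, 0 ≤ f x) :
    0 ≤ᵐ[volume] screenedInteraction f := by
  have h1 : ∀ᵐ p : E2 × E2, 0 ≤ f p.1 := Measure.quasiMeasurePreserving_fst.ae hf
  have h2 : ∀ᵐ p : E2 × E2, 0 ≤ f p.2 := Measure.quasiMeasurePreserving_snd.ae hf
  filter_upwards [h1, h2, ae_fst_ne_snd] with p h1 h2 h3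
  have := sub_nonneg.2 (log_norm_sub_le h3)
  simp only [screenedInteraction, Pi.zero_apply]
  positivity

lemma FiniteEntropyMoment.integrable_localEnergy (δ : ℝ) {f : E2 → ℝ}
    (hf : FiniteEntropyMoment f) : Integrable (localEnergy δ f) :=
  ((hf.entropy.add (hf.moment.const_mul _)).sub hf.integrable).add
    integrable_exp_neg_log_one_add_sq_norm

lemma FiniteEntropyMoment.integrable_moment_prod {f : E2 → ℝ} (hf : FiniteEntropyMoment f) :
    Integrable fun p : E2 × E2 =>
      f p.1 * f p.2 * (2⁻¹ * (log (1 + ‖p.1‖ ^ 2) + log (1 + ‖p.2‖ ^ 2))) := by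
  have h1 := hf.moment.mul_prod hf.integrable
  have h2 := hf.integrable.mul_prod hf.moment
  refine ((h1.add h2).const_mul 2⁻¹).congr (Eventually.of_forall fun p => ?_)
  simp only [Pi.add_apply]
  ring

lemma FiniteEntropyMoment.integral_moment_prod {f : E2 → ℝ} (hf : FiniteEntropyMoment f) :
    ∫ p : E2 × E2, f p.1 * f p.2 * (2⁻¹ * (log (1 + ‖p.1‖ ^ 2) + log (1 + ‖p.2‖ ^ 2))) =
      (∫ x, f x) * ∫ x, log (1 + ‖x‖ ^ 2) * f x := by
  have h1 := hf.moment.mul_prod hf.integrable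
  have h2 := hf.integrable.mul_prod hf.moment
  have h3 : ∀ p : E2 × E2,
      f p.1 * f p.2 * (2⁻¹ * (log (1 + ‖p.1‖ ^ 2) + log (1 + ‖p.2‖ ^ 2))) =
      2⁻¹ * ((log (1 + ‖p.1‖ ^ 2) * f p.1) * f p.2 +
        f p.1 * (log (1 + ‖p.2‖ ^ 2) * f p.2)) := fun p => by ring
  simp_rw [h3]
  rw [integral_const_mul, Measure.volume_eq_prod, integral_add h1 h2,
    integral_prod_mul (fun x => log (1 + ‖x‖ ^ 2) * f x) f,
    integral_prod_mul f (fun x => log (1 + ‖x‖ ^ 2) * f x)]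
  ring

lemma FiniteEntropyMoment.integrable_screenedInteraction {f : E2 → ℝ}
    (hf : FiniteEntropyMoment f) : Integrable (screenedInteraction f) := by
  refine ((hf.integrable_moment_prod.sub (hf.integrable_interaction hf)).const_mul
    (1 / (4 * π))).congr (Eventually.of_forall fun p => ?_)
  simp only [screenedInteraction, Pi.sub_apply]
  ring

/-- The free energy is, up to a constant, a sum of two integrals of nonnegative functions. -/
lemma FiniteEntropyMoment.Fplus_eq {f : E2 → ℝ} (hf : FiniteEntropyMoment f) {M : ℝ}
    (hM : ∫ x, f x = M) (β : ℝ) :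
    Fplus β f = (∫ x, localEnergy (β - (1 + M / (8 * π))) f x) +
      (∫ p, screenedInteraction f p) +
      (β * (log π * M) + M - ∫ x : E2, exp (-(3 / 2) * log (1 + ‖x‖ ^ 2))) := by
  have h1 : ∀ δ : ℝ, ∫ x, localEnergy δ f x = (∫ x, f x * log (f x)) +
      (2 + 2 * δ) * (∫ x, log (1 + ‖x‖ ^ 2) * f x) - M +
      ∫ x : E2, exp (-(3 / 2) * log (1 + ‖x‖ ^ 2)) := by
    intro δ
    have hE : Integrable fun x => f x * log (f x) +
        (2 + 2 * δ) * (log (1 + ‖x‖ ^ 2) * f x) := hf.entropy.add (hf.moment.const_mul _)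
    have hE' : Integrable fun x => f x * log (f x) +
        (2 + 2 * δ) * (log (1 + ‖x‖ ^ 2) * f x) - f x := hE.sub hf.integrable
    simp only [localEnergy]
    rw [integral_add hE' integrable_exp_neg_log_one_add_sq_norm, integral_sub hE hf.integrable,
      integral_add hf.entropy (hf.moment.const_mul _), integral_const_mul, hM]
  have h2 : ∫ p, screenedInteraction f p = 1 / (4 * π) *
      (M * (∫ x, log (1 + ‖x‖ ^ 2) * f x) -
        ∫ p : E2 × E2, f p.1 * f p.2 * log ‖p.1 - p.2‖) := by
    rw [← hM, ← hf.integral_moment_prod,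
      ← integral_sub hf.integrable_moment_prod (hf.integrable_interaction hf),
      ← integral_const_mul]
    congr 1 with p
    simp only [screenedInteraction]
    ring
  rw [h1, h2, Fplus, hf.integral_Vpot_mul, hM]
  field_simp
  ring

lemma ENNReal.liminf_add_liminf_le (u v : ℕ → ENNReal) :
    liminf u atTop + liminf v atTop ≤ liminf (fun n => u n + v n) atTop := by
  have hmono : ∀ w : ℕ → ENNReal, Monotone fun n => ⨅ i ≥ n, w i := fun w m n hmn =>
    le_iInf₂ fun i hi => iInf₂_le i (hmn.trans hi)
  simp only [liminf_eq_iSup_iInf_of_nat]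
  rw [ENNReal.iSup_add_iSup_of_monotone (hmono u) (hmono v)]
  exact iSup_mono fun n => le_iInf₂ fun i hi => add_le_add (iInf₂_le i hi) (iInf₂_le i hi)

/-- Fatou's lemma for the sum of two integrals. -/
lemma integrable_and_integral_add_le_of_tendsto {α γ : Type*} [MeasurableSpace α]
    [MeasurableSpace γ] {μ : Measure α} {ν : Measure γ} {u : ℕ → α → ℝ} {v : ℕ → γ → ℝ}
    {u₀ : α → ℝ} {v₀ : γ → ℝ} {L : ℝ} (hu : ∀ n, Integrable (u n) μ)
    (hv : ∀ n, Integrable (v n) ν) (hu0 : ∀ n, 0 ≤ᵐ[μ] u n) (hv0 : ∀ n, 0 ≤ᵐ[ν] v n)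
    (hut : ∀ᵐ x ∂μ, Tendsto (fun n => u n x) atTop (nhds (u₀ x)))
    (hvt : ∀ᵐ x ∂ν, Tendsto (fun n => v n x) atTop (nhds (v₀ x)))
    (hL : Tendsto (fun n => (∫ x, u n x ∂μ) + ∫ x, v n x ∂ν) atTop (nhds L)) :
    Integrable u₀ μ ∧ Integrable v₀ ν ∧ (∫ x, u₀ x ∂μ) + ∫ x, v₀ x ∂ν ≤ L := by
  have hL0 : 0 ≤ L := ge_of_tendsto' hL fun n =>
    add_nonneg (integral_nonneg_of_ae (hu0 n)) (integral_nonneg_of_ae (hv0 n))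
  have hum := aestronglyMeasurable_of_tendsto_ae atTop (fun n => (hu n).aestronglyMeasurable) hut
  have hvm := aestronglyMeasurable_of_tendsto_ae atTop (fun n => (hv n).aestronglyMeasurable) hvt
  have hu₀ : 0 ≤ᵐ[μ] u₀ := by
    filter_upwards [hut, ae_all_iff.2 hu0] with x h1 h2
    exact ge_of_tendsto' h1 h2
  have hv₀ : 0 ≤ᵐ[ν] v₀ := by
    filter_upwards [hvt, ae_all_iff.2 hv0] with x h1 h2
    exact ge_of_tendsto' h1 h2
  have fatou_u : ∫⁻ x, ENNReal.ofReal (u₀ x) ∂μ ≤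
      liminf (fun n => ∫⁻ x, ENNReal.ofReal (u n x) ∂μ) atTop := by
    refine le_trans (le_of_eq (lintegral_congr_ae ?_))
      (lintegral_liminf_le' fun n => (hu n).aestronglyMeasurable.aemeasurable.ennreal_ofReal)
    filter_upwards [hut] with x hx
    exact (ENNReal.tendsto_ofReal hx).liminf_eq.symm
  have fatou_v : ∫⁻ x, ENNReal.ofReal (v₀ x) ∂ν ≤
      liminf (fun n => ∫⁻ x, ENNReal.ofReal (v n x) ∂ν) atTop := by
    refine le_trans (le_of_eq (lintegral_congr_ae ?_))
      (lintegral_liminf_le' fun n => (hv n).aestronglyMeasurable.aemeasurable.ennreal_ofReal)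
    filter_upwards [hvt] with x hx
    exact (ENNReal.tendsto_ofReal hx).liminf_eq.symm
  have hsum : (∫⁻ x, ENNReal.ofReal (u₀ x) ∂μ) + ∫⁻ x, ENNReal.ofReal (v₀ x) ∂ν ≤
      ENNReal.ofReal L := by
    refine (add_le_add fatou_u fatou_v).trans ((ENNReal.liminf_add_liminf_le _ _).trans (le_of_eq ?_))
    rw [← (ENNReal.tendsto_ofReal hL).liminf_eq]
    congr 1 with n
    rw [ENNReal.ofReal_add (integral_nonneg_of_ae (hu0 n))
      (integral_nonneg_of_ae (hv0 n)), ofReal_integral_eq_lintegral_ofReal (hu n) (hu0 n),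
      ofReal_integral_eq_lintegral_ofReal (hv n) (hv0 n)]
  have hIu : Integrable u₀ μ := by
    refine ⟨hum, ?_⟩
    rw [hasFiniteIntegral_iff_ofReal hu₀]
    exact (le_self_add.trans hsum).trans_lt ENNReal.ofReal_lt_top
  have hIv : Integrable v₀ ν := by
    refine ⟨hvm, ?_⟩
    rw [hasFiniteIntegral_iff_ofReal hv₀]
    exact (le_add_self.trans hsum).trans_lt ENNReal.ofReal_lt_top
  refine ⟨hIu, hIv, ?_⟩
  rwa [← ofReal_integral_eq_lintegral_ofReal hIu hu₀,
    ← ofReal_integral_eq_lintegral_ofReal hIv hv₀, ← ENNReal.ofReal_add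
      (integral_nonneg_of_ae hu₀) (integral_nonneg_of_ae hv₀),
    ENNReal.ofReal_le_ofReal_iff hL0] at hsum

/-- A minimizing sequence converging almost everywhere and preserving mass in the limit has a
limit of finite entropy and moment, whose energy does not exceed the limiting energy. -/
lemma FiniteEntropyMoment.of_tendsto_Fplus {M β L : ℝ} (hβ : 1 + M / (8 * π) ≤ β)
    {f : ℕ → E2 → ℝ} {f₀ : E2 → ℝ} (hf : ∀ n, FiniteEntropyMoment (f n))
    (hM : ∀ n, ∫ x, f n x = M) (hL : Tendsto (fun n => Fplus β (f n)) atTop (nhds L))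
    (hm : Measurable f₀) (hi : Integrable f₀) (hM₀ : ∫ x, f₀ x = M)
    (hlim : ∀ᵐ x : E2, Tendsto (fun n => f n x) atTop (nhds (f₀ x))) :
    FiniteEntropyMoment f₀ ∧ Fplus β f₀ ≤ L := by
  set δ := β - (1 + M / (8 * π)) with hδ_def
  have hδ : 0 ≤ δ := sub_nonneg.2 hβ
  have h0 : ∀ᵐ x : E2, 0 ≤ f₀ x := by
    filter_upwards [hlim, ae_all_iff.2 fun n => (hf n).nonneg] with x h1 h2
    exact ge_of_tendsto' h1 h2
  have hlim1 : ∀ᵐ p : E2 × E2, Tendsto (fun n => f n p.1) atTop (nhds (f₀ p.1)) :=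
    Measure.quasiMeasurePreserving_fst.ae hlim
  have hlim2 : ∀ᵐ p : E2 × E2, Tendsto (fun n => f n p.2) atTop (nhds (f₀ p.2)) :=
    Measure.quasiMeasurePreserving_snd.ae hlim
  have hE : Tendsto (fun n => (∫ x, localEnergy δ (f n) x) + ∫ p, screenedInteraction (f n) p)
      atTop (nhds (L -
        (β * (log π * M) + M - ∫ x : E2, exp (-(3 / 2) * log (1 + ‖x‖ ^ 2))))) := by
    refine (hL.sub_const _).congr fun n => ?_
    rw [(hf n).Fplus_eq (hM n) β]
    ring
  obtain ⟨hP, -, hle⟩ := integrable_and_integral_add_le_of_tendsto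
    (u₀ := localEnergy δ f₀) (v₀ := screenedInteraction f₀)
    (fun n => (hf n).integrable_localEnergy δ) (fun n => (hf n).integrable_screenedInteraction)
    (fun n => (hf n).nonneg.mono fun x hx => localEnergy_nonneg hδ hx)
    (fun n => screenedInteraction_nonneg (hf n).nonneg)
    (by
      filter_upwards [hlim] with x hx
      exact (((continuous_mul_log.tendsto _).comp hx).add
        ((hx.const_mul _).const_mul _)).sub hx |>.add_const _)
    (by
      filter_upwards [hlim1, hlim2] with p h1 h2
      exact ((h1.mul h2).mul_const _).const_mul _) hE
  have hmom : Integrable fun x => log (1 + ‖x‖ ^ 2) * f₀ x := by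
    refine (hP.const_mul 2).mono' (by fun_prop) ?_
    filter_upwards [h0] with x hx
    rw [Real.norm_of_nonneg (mul_nonneg (log_one_add_sq_norm_nonneg x) hx)]
    linarith [moment_le_localEnergy hδ hx]
  have hent : Integrable fun x => f₀ x * log (f₀ x) := by
    refine (((hP.sub integrable_exp_neg_log_one_add_sq_norm).add hi).sub
      (hmom.const_mul (2 + 2 * δ))).congr (Eventually.of_forall fun x => ?_)
    simp only [localEnergy, Pi.sub_apply, Pi.add_apply]
    ring
  have h := FiniteEntropyMoment.mk hm h0 hi hent hmom
  refine ⟨h, ?_⟩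
  rw [h.Fplus_eq hM₀ β]
  linarith

/-! ### Existence of a minimizer -/

lemma bddBelow_Fplus {M β : ℝ} (hβ : 1 + M / (8 * π) ≤ β) :
    BddBelow {E | ∃ f : E2 → ℝ, FiniteEntropyMoment f ∧ ∫ x, f x = M ∧ Fplus β f = E} := by
  refine ⟨β * (log π * M) + M - ∫ x : E2, exp (-(3 / 2) * log (1 + ‖x‖ ^ 2)), ?_⟩
  rintro E ⟨f, hf, hM, rfl⟩
  rw [hf.Fplus_eq hM β]
  have h1 : 0 ≤ ∫ x, localEnergy (β - (1 + M / (8 * π))) f x :=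
    integral_nonneg_of_ae (hf.nonneg.mono fun x hx => localEnergy_nonneg (sub_nonneg.2 hβ) hx)
  have h2 : 0 ≤ ∫ p, screenedInteraction f p :=
    integral_nonneg_of_ae (screenedInteraction_nonneg hf.nonneg)
  linarith

lemma dist_toL1_eq_integral_abs_sub {f g : E2 → ℝ} (hf : Integrable f) (hg : Integrable g) :
    dist (hf.toL1 f) (hg.toL1 g) = ∫ x, |f x - g x| := by
  rw [dist_eq_norm, ← Integrable.toL1_sub, L1.norm_of_fun_eq_integral_norm]
  rfl

/-- Minimizing sequences of `Fplus β` at fixed mass are Cauchy in `L¹`. -/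
lemma cauchySeq_toL1_of_tendsto_Fplus {M β m : ℝ} (hM0 : 0 < M)
    {f : ℕ → E2 → ℝ} (hf : ∀ n, FiniteEntropyMoment (f n)) (hM : ∀ n, ∫ x, f n x = M)
    (hm : ∀ g : E2 → ℝ, FiniteEntropyMoment g → ∫ x, g x = M → m ≤ Fplus β g)
    (hlim : Tendsto (fun n => Fplus β (f n)) atTop (nhds m)) :
    CauchySeq fun n => (hf n).integrable.toL1 (f n) := by
  rw [Metric.cauchySeq_iff]
  intro ε hε
  set t := ε / (4 * M) with ht_def
  have ht : 0 < t := by positivity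
  have htM : t * (2 * M) = ε / 2 := by
    rw [ht_def]
    field_simp
    norm_num
  obtain ⟨N, hN⟩ := eventually_atTop.1
    (hlim.eventually (gt_mem_nhds (show m < m + t * ε / 4 by linarith [mul_pos ht hε])))
  refine ⟨N, fun i hi j hj => ?_⟩
  rw [dist_toL1_eq_integral_abs_sub]
  have hgap := mul_integral_abs_sub_le_Fplus_gap β (hf i) (hf j) ((hM i).trans (hM j).symm) t
  have hmid := hm _ ((hf i).midpoint (hf j)) (by
    rw [integral_const_mul, integral_add (hf i).integrable (hf j).integrable, hM, hM]
    ring)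
  rw [hM, hM] at hgap
  have h1 := hN i hi
  have h2 := hN j hj
  refine lt_of_mul_lt_mul_left ?_ ht.le
  nlinarith

/-- The repulsive free energy F⁺_β attains its infimum when β ≥ 1 + M/(8π). -/
theorem Fplus_minimizer_exists (M β : ℝ) (hM : 0 < M) (hβ : β ≥ 1 + M / (8 * π)) :
    ∃ f₀ : E2 → ℝ, Admissible f₀ ∧ (∫ x, f₀ x) = M ∧
      ∀ f : E2 → ℝ, Admissible f → (∫ x, f x) = M → Fplus β f₀ ≤ Fplus β f := by
  set S : Set ℝ := {E | ∃ f : E2 → ℝ, FiniteEntropyMoment f ∧ ∫ x, f x = M ∧ Fplus β f = E}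
  have hS : BddBelow S := bddBelow_Fplus hβ
  obtain ⟨f₁, hf₁, hM₁⟩ := exists_finiteEntropyMoment_integral_eq hM
  obtain ⟨u, -, hu, huS⟩ := exists_seq_tendsto_sInf (S := S) ⟨_, f₁, hf₁, hM₁, rfl⟩ hS
  choose f hf hfM hfu using huS
  have hm : ∀ g : E2 → ℝ, FiniteEntropyMoment g → ∫ x, g x = M → sInf S ≤ Fplus β g :=
    fun g hg hgM => csInf_le hS ⟨g, hg, hgM, rfl⟩
  have hlim : Tendsto (fun n => Fplus β (f n)) atTop (nhds (sInf S)) :=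
    hu.congr fun n => (hfu n).symm
  obtain ⟨g, hg⟩ :=
    cauchySeq_tendsto_of_complete (cauchySeq_toL1_of_tendsto_Fplus hM hf hfM hm hlim)
  have hgM : ∫ x, g x = M := by
    refine tendsto_nhds_unique ((continuous_integral.tendsto g).comp hg) ?_
    refine tendsto_const_nhds.congr fun n => ?_
    rw [Function.comp_apply, integral_congr_ae (hf n).integrable.coeFn_toL1, hfM]
  obtain ⟨ns, hns, hae⟩ := (tendstoInMeasure_of_tendsto_Lp hg).exists_seq_tendsto_ae
  have hae' : ∀ᵐ x : E2, Tendsto (fun n => f (ns n) x) atTop (nhds (g x)) := by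
    filter_upwards [hae, ae_all_iff.2 fun n => (hf n).integrable.coeFn_toL1] with x h1 h2
    exact h1.congr fun n => h2 (ns n)
  obtain ⟨hg₀, hgle⟩ := FiniteEntropyMoment.of_tendsto_Fplus hβ (fun n => hf (ns n))
    (fun n => hfM (ns n)) (hlim.comp hns.tendsto_atTop) (Lp.stronglyMeasurable g).measurable
    (L1.integrable_coeFn g) hgM hae'
  exact ⟨g, hg₀.admissible, hgM, fun h hh hhM =>
    hgle.trans (hm h hh.finiteEntropyMoment hhM)⟩
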